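/- Let X be a hereditarily indecomposable metrizable continuum with metric ρ, possessing an essential family {(A₀, B₀), (A₁, B₁)} with ρ(x, y) > 1 whenever x ∈ Aᵢ and y ∈ Bᵢ (i = 0, 1). Let μ : C(X) → ℝ be a Whitney map and let r > 0 be such that every member of the Whitney level 𝒲_r = μ⁻¹(r) is nonempty and has diameter less than 1/2, and put η = min{diam A : A ∈ 𝒲_r}. Then for every positive integer n, every finite cover of 𝒲_r by closed subsets (with respect to the Hausdorff metric), each of diameter less than η/(4n), contains an element that meets at least n other elements of the cover. -/

import Mathlib

open Set

/-- A space is *hereditarily indecomposable* if whenever two subcontinua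
(nonempty compact connected subsets) intersect, one is contained in the other. -/
def HereditarilyIndecomposable (X : Type*) [TopologicalSpace X] : Prop :=
  ∀ C D : Set X, IsCompact C → IsConnected C → IsCompact D → IsConnected D →
    (C ∩ D).Nonempty → C ⊆ D ∨ D ⊆ C

/-- `L` is a partition between `A` and `B`: a closed set whose complement is the
union of two disjoint open sets containing `A` and `B` respectively. -/
def IsPartitionBetween {X : Type*} [TopologicalSpace X] (L A B : Set X) : Prop :=
  IsClosed L ∧ ∃ U V : Set X, IsOpen U ∧ IsOpen V ∧ Disjoint U V ∧
    A ⊆ U ∧ B ⊆ V ∧ Lᶜ = U ∪ V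

/-- A family of pairs of disjoint closed sets is *essential* if every choice of
partitions between the pairs has nonempty intersection. -/
def IsEssentialFamily {X : Type*} [TopologicalSpace X] {I : Type*} (A B : I → Set X) : Prop :=
  (∀ i, IsClosed (A i)) ∧ (∀ i, IsClosed (B i)) ∧ (∀ i, Disjoint (A i) (B i)) ∧
    ∀ L : I → Set X, (∀ i, IsPartitionBetween (L i) (A i) (B i)) → (⋂ i, L i).Nonempty

/-- The hyperspace `C(X)` of subcontinua of a metric space `X`, with the topology
induced by the Hausdorff metric (which is the Vietoris topology for compact `X`). -/
abbrev SubcontinuaHyp (X : Type*) [MetricSpace X] : Type _ :=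
  {C : TopologicalSpace.NonemptyCompacts X // IsConnected (C : Set X)}

/-! Suppose every element of the cover meets fewer than `n` others. A continuum of diameter at
least `η` is not covered by fewer than `n` balls of radius `η / (2n)`, so one can greedily pick a
point `p S` on a member of each `S` such that `p S` and `p T` are at least `η / (2n)` apart whenever
`S` and `T` meet. Distinct members of the level are disjoint, so the mesh condition makes the spots
`spot S (p S)` pairwise disjoint, while the spot of `S` meets every member of `S`. Spots are too
small to meet both `A 0` and `B 0`, so some partition between `A 0` and `B 0` misses them all, and
by essentiality it contains a continuum `K` joining `A 1` to `B 1`. Hereditary indecomposability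
forces the member of the level through a point of `K ∩ A 1` to lie in `K`; it then misses every
spot, although it belongs to some `S`. -/

open TopologicalSpace (NonemptyCompacts)

lemma exists_forall_le_dist_of_card_mul_lt_diam {X : Type*} [PseudoMetricSpace X] {s : Set X}
    (hs : IsPreconnected s) {δ : ℝ} (hδ : 0 ≤ δ) (P : Finset X)
    (hP : P.card * (2 * δ) < Metric.diam s) :
    ∃ x ∈ s, ∀ p ∈ P, δ ≤ dist x p := by
  obtain ⟨a, ha, b, hb, hab⟩ : ∃ a ∈ s, ∃ b ∈ s, P.card * (2 * δ) < dist a b := by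
    by_contra! h
    exact hP.not_ge (Metric.diam_le_of_forall_dist_le (by positivity) h)
  by_contra! hnear
  have hcover : Icc 0 (dist a b) ⊆ ⋃ p ∈ P, Metric.ball (dist a p) δ := by
    intro t ht
    obtain ⟨x, hx, rfl⟩ : t ∈ dist a '' s :=
      hs.intermediate_value ha hb (by fun_prop) (by rwa [dist_self])
    obtain ⟨p, hp, hxp⟩ := hnear x hx
    refine mem_iUnion₂.2 ⟨p, hp, ?_⟩
    rw [Metric.mem_ball, dist_comm a x, dist_comm a p]
    exact (dist_dist_dist_le_left x p a).trans_lt hxp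
  have hlength : ENNReal.ofReal (dist a b) ≤ ENNReal.ofReal (P.card * (2 * δ)) := by
    calc ENNReal.ofReal (dist a b) = MeasureTheory.volume (Icc 0 (dist a b)) := by
          rw [Real.volume_Icc, sub_zero]
      _ ≤ ∑ p ∈ P, MeasureTheory.volume (Metric.ball (dist a p) δ) :=
          (MeasureTheory.measure_mono hcover).trans (MeasureTheory.measure_biUnion_finset_le _ _)
      _ = ENNReal.ofReal (P.card * (2 * δ)) := by
          simp only [Real.volume_ball, Finset.sum_const, nsmul_eq_mul,
            ENNReal.ofReal_mul (Nat.cast_nonneg P.card), ENNReal.ofReal_natCast]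
  exact hab.not_ge ((ENNReal.ofReal_le_ofReal_iff (by positivity)).1 hlength)

lemma ordConnected_of_isClosed_of_exists_between {α : Type*} [ConditionallyCompleteLinearOrder α]
    [TopologicalSpace α] [OrderTopology α] {s : Set α} (hs : IsClosed s)
    (hbetween : ∀ a ∈ s, ∀ b ∈ s, a < b → ∃ c ∈ s, a < c ∧ c < b) : s.OrdConnected := by
  refine ⟨fun a ha b hb r hr => by_contra fun hrs => ?_⟩
  have hbddAbove : BddAbove (s ∩ Iic r) := bddAbove_Iic.mono inter_subset_right
  have hbddBelow : BddBelow (s ∩ Ici r) := bddBelow_Ici.mono inter_subset_right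
  obtain ⟨hds, hdr⟩ := (hs.inter isClosed_Iic).csSup_mem ⟨a, ha, hr.1⟩ hbddAbove
  obtain ⟨hes, hre⟩ := (hs.inter isClosed_Ici).csInf_mem ⟨b, hb, hr.2⟩ hbddBelow
  have hdr' : sSup (s ∩ Iic r) < r := hdr.lt_of_ne fun h => hrs (h ▸ hds)
  obtain ⟨c, hcs, hdc, hce⟩ := hbetween _ hds _ hes (hdr'.trans_le hre)
  rcases le_total c r with hcr | hrc
  · exact hdc.not_ge (le_csSup hbddAbove ⟨hcs, hcr⟩)
  · exact hce.not_ge (csInf_le hbddBelow ⟨hcs, hrc⟩)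

lemma ncard_setOf_mem_and_mono {ι : Type*} {s t : Finset ι} (hst : s ⊆ t) (P : ι → Prop) :
    {j | j ∈ s ∧ P j}.ncard ≤ {j | j ∈ t ∧ P j}.ncard :=
  ncard_le_ncard (fun _ hj => hj.imp_left fun h => hst h) (t.finite_toSet.subset fun _ hj => hj.1)

lemma exists_pairwise_choice_of_ncard_lt {ι α : Type*} [Nonempty α] {adj : ι → ι → Prop}
    {far : α → α → Prop} [Std.Symm adj] [Std.Symm far] {M : ι → Set α} {n : ℕ} (s : Finset ι)
    (hdeg : ∀ i ∈ s, {j | j ∈ s ∧ j ≠ i ∧ adj i j}.ncard < n)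
    (hM : ∀ i ∈ s, ∀ P : Finset α, P.card < n → ∃ x ∈ M i, ∀ p ∈ P, far x p) :
    ∃ p : ι → α, (∀ i ∈ s, p i ∈ M i) ∧
      (s : Set ι).Pairwise fun i j => adj i j → far (p i) (p j) := by
  classical
  induction s using Finset.induction_on with
  | empty => exact ⟨fun _ => Classical.arbitrary α, by simp, by simp⟩
  | insert i s his ih =>
    have hdeg_s : ∀ k ∈ s, {j | j ∈ s ∧ j ≠ k ∧ adj k j}.ncard < n := fun k hk =>
      (ncard_setOf_mem_and_mono (Finset.subset_insert i s) _).trans_lt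
        (hdeg k (Finset.mem_insert_of_mem hk))
    obtain ⟨p, hpM, hpfar⟩ := ih hdeg_s fun k hk => hM k (Finset.mem_insert_of_mem hk)
    have hne : ∀ j ∈ s, j ≠ i := fun j hj hji => his (hji ▸ hj)
    have hcard : ((s.filter (adj i)).image p).card < n := by
      refine Finset.card_image_le.trans_lt (lt_of_le_of_lt ?_ (hdeg i (Finset.mem_insert_self i s)))
      rw [← ncard_coe_finset]
      refine ncard_le_ncard (fun j hj => ?_) ((insert i s).finite_toSet.subset fun j hj => hj.1)
      obtain ⟨hjs, hij⟩ := Finset.mem_filter.1 (Finset.mem_coe.1 hj)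
      exact ⟨Finset.mem_insert_of_mem hjs, hne j hjs, hij⟩
    obtain ⟨x, hxM, hxfar⟩ := hM i (Finset.mem_insert_self i s) _ hcard
    have hupdate : ∀ j ∈ s, Function.update p i x j = p j := fun j hj =>
      Function.update_of_ne (hne j hj) x p
    refine ⟨Function.update p i x, fun j hj => ?_, ?_⟩
    · rcases Finset.mem_insert.1 hj with rfl | hjs
      · rwa [Function.update_self]
      · exact hupdate j hjs ▸ hpM j hjs
    · have : Std.Symm fun j k => adj j k →
          far (Function.update p i x j) (Function.update p i x k) :=
        ⟨fun j k h hkj => symm_of far (h (symm_of adj hkj))⟩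
      rw [Finset.coe_insert, pairwise_insert_of_symm_of_notMem (by exact_mod_cast his)]
      refine ⟨fun j hj k hk hjk hadj => ?_, fun j hj hij => ?_⟩
      · rw [hupdate j hj, hupdate k hk]
        exact hpfar hj hk hjk hadj
      · rw [hupdate j hj, Function.update_self]
        exact hxfar _ (Finset.mem_image_of_mem p (Finset.mem_filter.2 ⟨hj, hij⟩))

section Continua

variable {X : Type*} [TopologicalSpace X] [T2Space X]

lemma exists_isClopen_of_forall_disjoint_connectedComponent [CompactSpace X] {E F : Set X}
    (hE : IsClosed E) (hF : IsClosed F) (hEF : ∀ x ∈ E, Disjoint (connectedComponent x) F) :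
    ∃ s : Set X, IsClopen s ∧ E ⊆ s ∧ Disjoint s F := by
  have hcont : Continuous ((↑) : X → ConnectedComponents X) := ConnectedComponents.continuous_coe
  have hdisj : (↑) '' E ⊆ ((↑) '' F : Set (ConnectedComponents X))ᶜ := by
    rintro _ ⟨x, hx, rfl⟩ ⟨y, hy, hyx⟩
    exact (hEF x hx).le_bot ⟨ConnectedComponents.coe_eq_coe'.1 hyx, hy⟩
  obtain ⟨D, hD, hED, hDF⟩ := exists_clopen_of_closed_subset_open
    (hE.isCompact.image hcont).isClosed (hF.isCompact.image hcont).isClosed.isOpen_compl hdisj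
  exact ⟨(↑) ⁻¹' D, hD.preimage hcont, image_subset_iff.1 hED,
    disjoint_left.2 fun x hxD hxF => hDF hxD (mem_image_of_mem _ hxF)⟩

lemma exists_continuum_or_separation {K E F : Set X} (hK : IsCompact K) (hE : IsClosed E)
    (hF : IsClosed F) :
    (∃ C ⊆ K, IsCompact C ∧ IsConnected C ∧ (C ∩ E).Nonempty ∧ (C ∩ F).Nonempty) ∨
      ∃ P Q : Set X, IsClosed P ∧ IsClosed Q ∧ Disjoint P Q ∧ K = P ∪ Q ∧
        K ∩ E ⊆ P ∧ K ∩ F ⊆ Q := by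
  refine or_iff_not_imp_left.2 fun hno => ?_
  have : CompactSpace K := isCompact_iff_compactSpace.1 hK
  have hcont : Continuous ((↑) : K → X) := continuous_subtype_val
  obtain ⟨s, hs, hEs, hsF⟩ := exists_isClopen_of_forall_disjoint_connectedComponent
    (hE.preimage hcont) (hF.preimage hcont) fun x hxE => disjoint_left.2 fun y hyx hyF =>
      hno ⟨(↑) '' connectedComponent x, Subtype.coe_image_subset K _,
        isClosed_connectedComponent.isCompact.image hcont,
        isConnected_connectedComponent.image _ hcont.continuousOn,
        ⟨x, mem_image_of_mem _ mem_connectedComponent, hxE⟩, ⟨y, mem_image_of_mem _ hyx, hyF⟩⟩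
  refine ⟨(↑) '' s, (↑) '' sᶜ, (hs.isClosed.isCompact.image hcont).isClosed,
    (hs.compl.isClosed.isCompact.image hcont).isClosed,
    (disjoint_image_iff Subtype.val_injective).2 disjoint_compl_right, ?_, ?_, ?_⟩
  · rw [← image_union, union_compl_self, image_univ, Subtype.range_coe]
  · rintro x ⟨hxK, hxE⟩
    exact ⟨⟨x, hxK⟩, hEs hxE, rfl⟩
  · rintro x ⟨hxK, hxF⟩
    exact ⟨⟨x, hxK⟩, fun hxs => hsF.le_bot ⟨hxs, hxF⟩, rfl⟩

lemma exists_continuum_subset_closure_not_subset {E U : Set X} (hE : IsCompact E)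
    (hEc : IsPreconnected E) (hU : IsOpen U) (hEU : ¬E ⊆ U) {x : X} (hxE : x ∈ E) (hxU : x ∈ U) :
    ∃ C ⊆ closure U ∩ E, IsCompact C ∧ IsConnected C ∧ x ∈ C ∧ ¬C ⊆ U := by
  rcases exists_continuum_or_separation (hE.inter_left isClosed_closure)
      (isClosed_singleton (x := x)) hU.isClosed_compl with
    ⟨C, hCE, hC, hCc, hxC, hCU⟩ | ⟨P, Q, hP, hQ, hPQ, hKPQ, hxP, hUQ⟩
  · exact ⟨C, hCE, hC, hCc, inter_singleton_nonempty.1 hxC, inter_compl_nonempty_iff.1 hCU⟩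
  · obtain ⟨y, hyE, hyU⟩ := not_subset.1 hEU
    have hE_subset : E ⊆ P ∪ (Q ∪ Uᶜ) := fun z hz => by
      by_cases hzU : z ∈ U
      · exact (hKPQ.subset ⟨subset_closure hzU, hz⟩).imp_right Or.inl
      · exact Or.inr (Or.inr hzU)
    obtain ⟨z, -, hzP, hzQ⟩ := isPreconnected_closed_iff.1 hEc P (Q ∪ Uᶜ) hP
      (hQ.union hU.isClosed_compl) hE_subset ⟨x, hxE, hxP ⟨⟨subset_closure hxU, hxE⟩, rfl⟩⟩
      ⟨y, hyE, Or.inr hyU⟩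
    exact (hPQ.le_bot ⟨hzP, hzQ.elim id fun hzU => hUQ ⟨hKPQ.superset (Or.inl hzP), hzU⟩⟩).elim

lemma exists_continuum_between [NormalSpace X] {D E : Set X} (hD : IsCompact D)
    (hDc : IsConnected D) (hE : IsCompact E) (hEc : IsPreconnected E) (hDE : D ⊂ E) :
    ∃ M : Set X, IsCompact M ∧ IsConnected M ∧ D ⊂ M ∧ M ⊂ E := by
  obtain ⟨y, hyE, hyD⟩ := exists_of_ssubset hDE
  obtain ⟨U, hU, hDU, hUy⟩ := normal_exists_closure_subset hD.isClosed
    (isOpen_compl_singleton (x := y)) (subset_compl_singleton_iff.2 hyD)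
  have hy_closure : y ∉ closure U := subset_compl_singleton_iff.1 hUy
  obtain ⟨x, hxD⟩ := hDc.nonempty
  obtain ⟨C, hCE, hC, hCc, hxC, hCU⟩ := exists_continuum_subset_closure_not_subset hE hEc hU
    (fun hEU => hy_closure (subset_closure (hEU hyE))) (hDE.subset hxD) (hDU hxD)
  refine ⟨D ∪ C, hD.union hC, hDc.union ⟨x, hxD, hxC⟩ hCc, ⟨subset_union_left, ?_⟩,
    union_subset hDE.subset (hCE.trans inter_subset_right), fun hEDC => ?_⟩
  · exact fun hDC => hCU ((subset_union_right.trans hDC).trans hDU)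
  · exact (hEDC hyE).elim hyD fun hyC => hy_closure (hCE hyC).1

lemma isClosed_setOf_isConnected : IsClosed {K : NonemptyCompacts X | IsConnected (K : Set X)} := by
  rw [← isOpen_compl_iff, isOpen_iff_mem_nhds]
  intro K hK
  have hK' : ¬IsPreconnected (K : Set X) := fun h => hK ⟨K.nonempty, h⟩
  rw [isPreconnected_closed_iff] at hK'
  push Not at hK'
  obtain ⟨P, Q, hP, hQ, hKPQ, hKP, hKQ, hempty⟩ := hK'
  have hPQ : Disjoint ((K : Set X) ∩ P) (K ∩ Q) := by
    rw [disjoint_iff_inter_eq_empty, ← inter_inter_distrib_left, hempty]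
  obtain ⟨U, V, hU, hV, hPU, hQV, hUV⟩ := SeparatedNhds.of_isCompact_isCompact
    (K.isCompact.inter_right hP) (K.isCompact.inter_right hQ) hPQ
  have hKUV : (K : Set X) ⊆ U ∪ V := fun x hx =>
    (hKPQ hx).imp (fun hxP => hPU ⟨hx, hxP⟩) fun hxQ => hQV ⟨hx, hxQ⟩
  filter_upwards [
    (NonemptyCompacts.isOpen_subsets_of_isOpen (hU.union hV)).mem_nhds hKUV,
    (NonemptyCompacts.isOpen_inter_nonempty_of_isOpen hU).mem_nhds
      (hKP.mono (subset_inter inter_subset_left hPU)),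
    (NonemptyCompacts.isOpen_inter_nonempty_of_isOpen hV).mem_nhds
      (hKQ.mono (subset_inter inter_subset_left hQV))] with L hLUV hLU hLV hL
  obtain ⟨x, -, hxU, hxV⟩ := hL.isPreconnected U V hU hV hLUV hLU hLV
  exact hUV.le_bot ⟨hxU, hxV⟩

end Continua

section Hyperspace

variable {X : Type*} [MetricSpace X]

instance SubcontinuaHyp.compactSpace [CompactSpace X] : CompactSpace (SubcontinuaHyp X) :=
  isCompact_iff_compactSpace.1 isClosed_setOf_isConnected.isCompact

instance SubcontinuaHyp.denselyOrdered : DenselyOrdered (SubcontinuaHyp X) where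
  dense D E hDE := by
    obtain ⟨M, hM, hMc, hDM, hME⟩ := exists_continuum_between D.1.isCompact D.2 E.1.isCompact
      E.2.isPreconnected (SetLike.coe_ssubset_coe.2 hDE)
    exact ⟨⟨⟨⟨M, hM⟩, hMc.nonempty⟩, hMc⟩, hDM, hME⟩

lemma SubcontinuaHyp.isCompact_biUnion {S : Set (SubcontinuaHyp X)} (hS : IsCompact S) :
    IsCompact (⋃ C ∈ S, (C.1 : Set X)) := by
  simpa only [biUnion_image] using NonemptyCompacts.isCompact_biUnion_coe_of_isCompact
    (hS.image continuous_subtype_val)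

lemma SubcontinuaHyp.isClosed_setOf_mem (x : X) : IsClosed {C : SubcontinuaHyp X | x ∈ C.1} := by
  simpa only [inter_singleton_nonempty, preimage_ofPred_eq] using!
    (NonemptyCompacts.isClosed_inter_nonempty_of_isClosed
      (isClosed_singleton (x := x))).preimage continuous_subtype_val

namespace HereditarilyIndecomposable

lemma le_or_ge (hX : HereditarilyIndecomposable X) {C D : SubcontinuaHyp X} {x : X}
    (hxC : x ∈ C.1) (hxD : x ∈ D.1) : C ≤ D ∨ D ≤ C :=
  hX C.1 D.1 C.1.isCompact C.2 D.1.isCompact D.2 ⟨x, hxC, hxD⟩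

lemma pairwiseDisjoint_level {α : Type*} [Preorder α] (hX : HereditarilyIndecomposable X)
    {μ : SubcontinuaHyp X → α} (hμ : StrictMono μ) (r : α) :
    {C | μ C = r}.PairwiseDisjoint fun C => (C.1 : Set X) := by
  intro C (hC : μ C = r) D (hD : μ D = r) hCD
  refine disjoint_left.2 fun x hxC hxD => ?_
  rcases hX.le_or_ge hxC hxD with hle | hle
  · exact (hμ (hle.lt_of_ne hCD)).ne (hC.trans hD.symm)
  · exact (hμ (hle.lt_of_ne hCD.symm)).ne (hD.trans hC.symm)

lemma exists_mem_level [CompactSpace X] {α : Type*} [ConditionallyCompleteLinearOrder α]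
    [TopologicalSpace α] [OrderTopology α] (hX : HereditarilyIndecomposable X)
    {μ : SubcontinuaHyp X → α} (hμcont : Continuous μ) (hμmono : StrictMono μ) {x : X}
    {D E : SubcontinuaHyp X} (hxD : x ∈ D.1) (hxE : x ∈ E.1) {r : α} (hDr : μ D ≤ r)
    (hrE : r ≤ μ E) : ∃ C : SubcontinuaHyp X, x ∈ C.1 ∧ μ C = r := by
  have hclosed : IsClosed (μ '' {C | x ∈ C.1}) :=
    ((SubcontinuaHyp.isClosed_setOf_mem x).isCompact.image hμcont).isClosed
  have hbetween : ∀ a ∈ μ '' {C | x ∈ C.1}, ∀ b ∈ μ '' {C | x ∈ C.1}, a < b →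
      ∃ c ∈ μ '' {C | x ∈ C.1}, a < c ∧ c < b := by
    rintro _ ⟨P, hxP, rfl⟩ _ ⟨Q, hxQ, rfl⟩ hPQ
    have hle : P ≤ Q := (hX.le_or_ge hxP hxQ).resolve_right fun h => hPQ.not_ge (hμmono.monotone h)
    obtain ⟨M, hPM, hMQ⟩ := exists_between (hle.lt_of_ne fun h => hPQ.ne (congrArg μ h))
    exact ⟨μ M, mem_image_of_mem μ (hPM.le hxP), hμmono hPM, hμmono hMQ⟩
  exact (ordConnected_of_isClosed_of_exists_between hclosed hbetween).out
    (mem_image_of_mem μ hxD) (mem_image_of_mem μ hxE) ⟨hDr, hrE⟩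

end HereditarilyIndecomposable

end Hyperspace

section EssentialFamilies

variable {X : Type*} [TopologicalSpace X]

namespace IsPartitionBetween

lemma mono {L A B A' B' : Set X} (hL : IsPartitionBetween L A B) (hA : A' ⊆ A) (hB : B' ⊆ B) :
    IsPartitionBetween L A' B' := by
  obtain ⟨hclosed, U, V, hU, hV, hUV, hAU, hBV, hcompl⟩ := hL
  exact ⟨hclosed, U, V, hU, hV, hUV, hA.trans hAU, hB.trans hBV, hcompl⟩

lemma disjoint_union {L A B : Set X} (hL : IsPartitionBetween L A B) : Disjoint L (A ∪ B) := by
  obtain ⟨-, U, V, -, -, -, hAU, hBV, hcompl⟩ := hL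
  exact subset_compl_iff_disjoint_left.1 (hcompl ▸ union_subset_union hAU hBV)

end IsPartitionBetween

lemma exists_isPartitionBetween [NormalSpace X] {A B : Set X} (hA : IsClosed A) (hB : IsClosed B)
    (hAB : Disjoint A B) : ∃ L, IsPartitionBetween L A B := by
  obtain ⟨U, V, hU, hV, hAU, hBV, hUV⟩ := normal_separation hA hB hAB
  exact ⟨(U ∪ V)ᶜ, (hU.union hV).isClosed_compl, U, V, hU, hV, hUV, hAU, hBV, compl_compl _⟩

namespace IsEssentialFamily

variable {I : Type*} {A B : I → Set X}

lemma exists_partitions [NormalSpace X] (hAB : IsEssentialFamily A B) :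
    ∃ L : I → Set X, ∀ i, IsPartitionBetween (L i) (A i) (B i) :=
  ⟨_, fun i => (exists_isPartitionBetween (hAB.1 i) (hAB.2.1 i) (hAB.2.2.1 i)).choose_spec⟩

lemma nonempty [NormalSpace X] (hAB : IsEssentialFamily A B) : Nonempty X :=
  let ⟨L, hL⟩ := hAB.exists_partitions
  (hAB.2.2.2 L hL).to_type

lemma exists_continuum_subset_iInter [CompactSpace X] [T2Space X] (hAB : IsEssentialFamily A B)
    (j : I) {L : I → Set X} (hL : ∀ i, i ≠ j → IsPartitionBetween (L i) (A i) (B i)) :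
    ∃ C ⊆ ⋂ (i) (_ : i ≠ j), L i,
      IsCompact C ∧ IsConnected C ∧ (C ∩ A j).Nonempty ∧ (C ∩ B j).Nonempty := by
  classical
  obtain ⟨hA, hB, hdisj, hess⟩ := hAB
  have hK : IsCompact (⋂ (i) (_ : i ≠ j), L i) :=
    (isClosed_iInter fun i => isClosed_iInter fun hij => (hL i hij).1).isCompact
  refine (exists_continuum_or_separation hK (hA j) (hB j)).resolve_right ?_
  rintro ⟨P, Q, hP, hQ, hPQ, hKPQ, hAP, hBQ⟩
  have hseparated : Disjoint (A j ∪ P) (B j ∪ Q) := by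
    rw [disjoint_union_left, disjoint_union_right, disjoint_union_right]
    refine ⟨⟨hdisj j, disjoint_left.2 fun x hxA hxQ => ?_⟩,
      disjoint_left.2 fun x hxP hxB => ?_, hPQ⟩
    · exact hPQ.le_bot ⟨hAP ⟨hKPQ.superset (Or.inr hxQ), hxA⟩, hxQ⟩
    · exact hPQ.le_bot ⟨hxP, hBQ ⟨hKPQ.superset (Or.inl hxP), hxB⟩⟩
  obtain ⟨M, hM⟩ := exists_isPartitionBetween ((hA j).union hP) ((hB j).union hQ) hseparated
  obtain ⟨x, hx⟩ := hess (Function.update L j M) fun i => by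
    rcases eq_or_ne i j with rfl | hij
    · rw [Function.update_self]
      exact hM.mono subset_union_left subset_union_left
    · rw [Function.update_of_ne hij]
      exact hL i hij
  rw [mem_iInter] at hx
  have hxM : x ∈ M := by simpa only [Function.update_self] using hx j
  have hxK : x ∈ ⋂ (i) (_ : i ≠ j), L i :=
    mem_iInter₂.2 fun i hij => by simpa only [Function.update_of_ne hij] using hx i
  exact hM.disjoint_union.le_bot ⟨hxM, (hKPQ.subset hxK).imp Or.inr Or.inr⟩

lemma exists_continuum_forall_disjoint [CompactSpace X] [T2Space X] (hAB : IsEssentialFamily A B)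
    {i j : I} (hij : i ≠ j) {ι : Type*} (s : Finset ι) {G : ι → Set X}
    (hclosed : ∀ k ∈ s, IsClosed (G k)) (hdisj : (s : Set ι).PairwiseDisjoint G)
    (hG : ∀ k ∈ s, Disjoint (G k) (A i) ∨ Disjoint (G k) (B i)) :
    ∃ K : Set X, IsCompact K ∧ IsConnected K ∧ (K ∩ A j).Nonempty ∧ (K ∩ B j).Nonempty ∧
      ∀ k ∈ s, Disjoint K (G k) := by
  classical
  obtain ⟨L, hL⟩ := hAB.exists_partitions
  have ⟨hA, hB, hABdisj, _⟩ := hAB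
  let sA := s.filter fun k => Disjoint (G k) (B i)
  let sB := s.filter fun k => ¬Disjoint (G k) (B i)
  have hseparated : Disjoint (A i ∪ ⋃ k ∈ sA, G k) (B i ∪ ⋃ k ∈ sB, G k) := by
    simp only [disjoint_union_left, disjoint_union_right, disjoint_iUnion_left,
      disjoint_iUnion_right, sA, sB, Finset.mem_filter]
    refine ⟨⟨hABdisj i, fun k hk => hk.2⟩, fun k hk => ⟨?_, fun l hl => ?_⟩⟩
    · exact ((hG k hk.1).resolve_right hk.2).symm
    · exact hdisj hl.1 hk.1 fun hlk => hk.2 (hlk ▸ hl.2)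
  obtain ⟨M, hM⟩ := exists_isPartitionBetween
    ((hA i).union (isClosed_biUnion_finset fun k hk => hclosed k (Finset.mem_filter.1 hk).1))
    ((hB i).union (isClosed_biUnion_finset fun k hk => hclosed k (Finset.mem_filter.1 hk).1))
    hseparated
  obtain ⟨K, hKL, hK, hKc, hKA, hKB⟩ := hAB.exists_continuum_subset_iInter j
    (L := Function.update L i M) fun k _ => by
      rcases eq_or_ne k i with rfl | hki
      · rw [Function.update_self]
        exact hM.mono subset_union_left subset_union_left
      · rw [Function.update_of_ne hki]
        exact hL k
  have hKM : K ⊆ M := by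
    simpa only [Function.update_self] using hKL.trans (iInter₂_subset i hij)
  refine ⟨K, hK, hKc, hKA, hKB, fun k hk => hM.disjoint_union.mono hKM ?_⟩
  by_cases hkB : Disjoint (G k) (B i)
  · exact (subset_biUnion_of_mem (u := G) (Finset.mem_filter.2 ⟨hk, hkB⟩)).trans
      (subset_union_right.trans subset_union_left)
  · exact (subset_biUnion_of_mem (u := G) (Finset.mem_filter.2 ⟨hk, hkB⟩)).trans
      (subset_union_right.trans subset_union_right)

end IsEssentialFamily

end EssentialFamilies

lemma HereditarilyIndecomposable.exists_mem_forall_disjoint {X I ι : Type*} [MetricSpace X]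
    [CompactSpace X] (hX : HereditarilyIndecomposable X) {A B : I → Set X}
    (hAB : IsEssentialFamily A B) {i j : I} (hij : i ≠ j) {𝒲 : Set (SubcontinuaHyp X)}
    (hcover : ∀ x, ∃ C ∈ 𝒲, x ∈ C.1)
    (h𝒲 : ∀ C ∈ 𝒲, Disjoint (C.1 : Set X) (A j) ∨ Disjoint (C.1 : Set X) (B j)) (s : Finset ι)
    {G : ι → Set X} (hclosed : ∀ k ∈ s, IsClosed (G k)) (hdisj : (s : Set ι).PairwiseDisjoint G)
    (hG : ∀ k ∈ s, Disjoint (G k) (A i) ∨ Disjoint (G k) (B i)) :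
    ∃ C ∈ 𝒲, ∀ k ∈ s, Disjoint (C.1 : Set X) (G k) := by
  obtain ⟨K, hK, hKc, ⟨a, haK, haA⟩, ⟨b, hbK, hbB⟩, hKG⟩ :=
    hAB.exists_continuum_forall_disjoint hij s hclosed hdisj hG
  obtain ⟨W, hW, haW⟩ := hcover a
  have hKW : ¬K ⊆ W.1 := fun hKW =>
    (h𝒲 W hW).elim (fun h => h.le_bot ⟨haW, haA⟩) fun h => h.le_bot ⟨hKW hbK, hbB⟩
  have hWK : (W.1 : Set X) ⊆ K :=
    (hX W.1 K W.1.isCompact W.2 hK hKc ⟨a, haW, haK⟩).resolve_right hKW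
  exact ⟨W, hW, fun k hk => (hKG k hk).mono_left hWK⟩

lemma disjoint_or_disjoint_of_dist_le {X : Type*} [PseudoMetricSpace X] {s A B : Set X} {δ : ℝ}
    (hAB : ∀ x ∈ A, ∀ y ∈ B, δ < dist x y) (hs : ∀ x ∈ s, ∀ y ∈ s, dist x y ≤ δ) :
    Disjoint s A ∨ Disjoint s B := by
  by_contra! hmeets
  obtain ⟨⟨x, hxs, hxA⟩, ⟨y, hys, hyB⟩⟩ := hmeets.imp not_disjoint_iff.1 not_disjoint_iff.1
  exact (hAB x hxA y hyB).not_ge (hs x hxs y hys)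

section Spots

variable {X : Type*} [MetricSpace X]

/-- The *spot* at `p` of a set `S` of subcontinua: the part of the union of `S` within distance
`diam S` of `p`. When `p` lies on a member of `S`, the Hausdorff metric makes the spot meet every
member of `S`. -/
def spot (S : Set (SubcontinuaHyp X)) (p : X) : Set X :=
  Metric.closedBall p (Metric.diam S) ∩ ⋃ C ∈ S, (C.1 : Set X)

lemma isClosed_spot {S : Set (SubcontinuaHyp X)} (hS : IsCompact S) (p : X) :
    IsClosed (spot S p) :=
  Metric.isClosed_closedBall.inter (SubcontinuaHyp.isCompact_biUnion hS).isClosed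

lemma dist_le_of_mem_spot {S : Set (SubcontinuaHyp X)} {p x y : X} (hx : x ∈ spot S p)
    (hy : y ∈ spot S p) : dist x y ≤ 2 * Metric.diam S := by
  rw [two_mul]
  exact (dist_triangle_right x y p).trans (add_le_add hx.1 hy.1)

lemma inter_spot_nonempty {S : Set (SubcontinuaHyp X)} (hS : Bornology.IsBounded S)
    {C : SubcontinuaHyp X} (hC : C ∈ S) {p : X} (hp : p ∈ ⋃ D ∈ S, (D.1 : Set X)) :
    ((C.1 : Set X) ∩ spot S p).Nonempty := by
  obtain ⟨D, hD, hpD⟩ := mem_iUnion₂.1 hp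
  obtain ⟨y, hyC, hpy⟩ := C.1.isCompact.exists_infDist_eq_dist C.1.nonempty p
  refine ⟨y, hyC, ?_, mem_iUnion₂.2 ⟨C, hC, hyC⟩⟩
  rw [Metric.mem_closedBall']
  calc dist p y = Metric.infDist p C.1 := hpy.symm
    _ ≤ dist D C := Metric.infDist_le_hausdorffDist_of_mem hpD
        (Metric.hausdorffEDist_ne_top_of_nonempty_of_bounded D.1.nonempty C.1.nonempty
          D.1.isCompact.isBounded C.1.isCompact.isBounded)
    _ ≤ Metric.diam S := Metric.dist_le_diam_of_mem hS hD hC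

lemma disjoint_spot {𝒲 S T : Set (SubcontinuaHyp X)}
    (h𝒲 : 𝒲.PairwiseDisjoint fun C => (C.1 : Set X)) (hS : S ⊆ 𝒲) (hT : T ⊆ 𝒲) {p q : X}
    (hpq : (S ∩ T).Nonempty → Metric.diam S + Metric.diam T < dist p q) :
    Disjoint (spot S p) (spot T q) := by
  refine disjoint_left.2 fun x ⟨hxp, hxS⟩ ⟨hxq, hxT⟩ => ?_
  obtain ⟨C, hC, hxC⟩ := mem_iUnion₂.1 hxS
  obtain ⟨D, hD, hxD⟩ := mem_iUnion₂.1 hxT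
  obtain rfl : C = D := h𝒲.elim_set (hS hC) (hT hD) x hxC hxD
  rw [Metric.mem_closedBall'] at hxp hxq
  exact (hpq ⟨C, hC, hD⟩).not_ge ((dist_triangle_right p q x).trans (add_le_add hxp hxq))

lemma exists_spread_points [Nonempty X] {η : ℝ} (hη : 0 < η) {n : ℕ}
    (F : Finset (Set (SubcontinuaHyp X)))
    (hdiam : ∀ S ∈ F, ∀ C ∈ S, η ≤ Metric.diam (C.1 : Set X))
    (hfew : ∀ S ∈ F, {T | T ∈ F ∧ T ≠ S ∧ (S ∩ T).Nonempty}.ncard < n) :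
    ∃ p : Set (SubcontinuaHyp X) → X, (∀ S ∈ F, S.Nonempty → p S ∈ ⋃ C ∈ S, (C.1 : Set X)) ∧
      (F : Set (Set (SubcontinuaHyp X))).Pairwise fun S T =>
        (S ∩ T).Nonempty → η / (2 * n) ≤ dist (p S) (p T) := by
  classical
  have hfar : ∀ S ∈ F, S.Nonempty → ∀ P : Finset X, P.card < n →
      ∃ x ∈ ⋃ C ∈ S, (C.1 : Set X), ∀ p ∈ P, η / (2 * n) ≤ dist x p := by
    rintro S hS ⟨C, hC⟩ P hP
    have hcard : P.card * (2 * (η / (2 * n))) < Metric.diam (C.1 : Set X) := by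
      have hPn : (P.card : ℝ) < n := by exact_mod_cast hP
      have hn : (0 : ℝ) < n := (Nat.cast_nonneg _).trans_lt hPn
      calc P.card * (2 * (η / (2 * n))) = P.card * (η / n) := by field_simp
        _ < n * (η / n) := by gcongr
        _ = η := by field_simp
        _ ≤ Metric.diam (C.1 : Set X) := hdiam S hS C hC
    obtain ⟨x, hxC, hx⟩ := exists_forall_le_dist_of_card_mul_lt_diam C.2.isPreconnected
      (by positivity) P hcard
    exact ⟨x, mem_iUnion₂.2 ⟨C, hC, hxC⟩, hx⟩
  have : Std.Symm fun S T : Set (SubcontinuaHyp X) => (S ∩ T).Nonempty :=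
    ⟨fun S T h => inter_comm S T ▸ h⟩
  have : Std.Symm fun x y : X => η / (2 * n) ≤ dist x y := ⟨fun x y h => dist_comm x y ▸ h⟩
  obtain ⟨p, hp, hspread⟩ := exists_pairwise_choice_of_ncard_lt (F.filter Set.Nonempty)
    (fun S hS => (ncard_setOf_mem_and_mono (Finset.filter_subset _ F) _).trans_lt
      (hfew S (Finset.mem_filter.1 hS).1))
    fun S hS => hfar S (Finset.mem_filter.1 hS).1 (Finset.mem_filter.1 hS).2
  exact ⟨p, fun S hS hne => hp S (Finset.mem_filter.2 ⟨hS, hne⟩), fun S hS T hT hST hne =>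
    hspread (Finset.mem_filter.2 ⟨hS, hne.left⟩) (Finset.mem_filter.2 ⟨hT, hne.right⟩) hST hne⟩

end Spots

theorem whitney_level_cover_has_crowded_element_general
    {X : Type*} [MetricSpace X] [CompactSpace X] (hX : HereditarilyIndecomposable X)
    {A B : Fin 2 → Set X} (hAB : IsEssentialFamily A B) {δ : ℝ}
    (hfar : ∀ i : Fin 2, ∀ x ∈ A i, ∀ y ∈ B i, δ < dist x y) {𝒲 : Set (SubcontinuaHyp X)}
    (hdisj : 𝒲.PairwiseDisjoint fun C => (C.1 : Set X)) (hcover : ∀ x, ∃ C ∈ 𝒲, x ∈ C.1)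
    {η : ℝ} (hη : ∀ C ∈ 𝒲, η ≤ Metric.diam (C.1 : Set X))
    (hδ : ∀ C ∈ 𝒲, Metric.diam (C.1 : Set X) ≤ δ) {n : ℕ} (hn : 0 < n)
    {F : Finset (Set (SubcontinuaHyp X))} (hFclosed : ∀ S ∈ F, IsClosed S)
    (hFsub : ∀ S ∈ F, S ⊆ 𝒲) (hFmesh : ∀ S ∈ F, Metric.diam S < η / (4 * n))
    (hFcover : 𝒲 ⊆ ⋃ S ∈ F, S) :
    ∃ S ∈ F, n ≤ {T | T ∈ F ∧ T ≠ S ∧ (S ∩ T).Nonempty}.ncard := by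
  by_contra! hfew
  have : Nonempty X := hAB.nonempty
  have hn' : (1 : ℝ) ≤ n := by exact_mod_cast hn
  obtain ⟨hηpos, hηδ⟩ : 0 < η ∧ η ≤ δ := by
    obtain ⟨C, hC, -⟩ := hcover (Classical.arbitrary X)
    obtain ⟨S, hS, -⟩ := mem_iUnion₂.1 (hFcover hC)
    have hmesh : 0 < η / (4 * n) := Metric.diam_nonneg.trans_lt (hFmesh S hS)
    exact ⟨(div_pos_iff_of_pos_right (by positivity)).1 hmesh, (hη C hC).trans (hδ C hC)⟩
  obtain ⟨p, hp, hspread⟩ :=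
    exists_spread_points hηpos F (fun S hS C hC => hη C (hFsub S hS hC)) hfew
  have hspots : (F : Set (Set (SubcontinuaHyp X))).PairwiseDisjoint fun S => spot S (p S) :=
    fun S hS T hT hST => disjoint_spot hdisj (hFsub S hS) (hFsub T hT) fun hne =>
      calc Metric.diam S + Metric.diam T < η / (4 * n) + η / (4 * n) :=
            add_lt_add (hFmesh S hS) (hFmesh T hT)
        _ = η / (2 * n) := by ring
        _ ≤ dist (p S) (p T) := hspread hS hT hST hne
  have hsmall : ∀ S ∈ F, 2 * Metric.diam S ≤ δ := fun S hS => by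
    have hle : η / (4 * n) ≤ η / 4 := by gcongr; linarith
    linarith [hFmesh S hS]
  obtain ⟨W, hW, hWspot⟩ := hX.exists_mem_forall_disjoint hAB zero_ne_one hcover
    (fun C hC => disjoint_or_disjoint_of_dist_le (hfar 1) fun x hx y hy =>
      (Metric.dist_le_diam_of_mem C.1.isCompact.isBounded hx hy).trans (hδ C hC))
    F (fun S hS => isClosed_spot (hFclosed S hS).isCompact (p S)) hspots
    fun S hS => disjoint_or_disjoint_of_dist_le (hfar 0) fun x hx y hy =>
      (dist_le_of_mem_spot hx hy).trans (hsmall S hS)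
  obtain ⟨S, hS, hWS⟩ := mem_iUnion₂.1 (hFcover hW)
  exact not_disjoint_iff_nonempty_inter.2
    (inter_spot_nonempty (hFclosed S hS).isCompact.isBounded hWS (hp S hS ⟨W, hWS⟩)) (hWspot S hS)

/-- Kelley: in a suitable Whitney level of a two-dimensional hereditarily indecomposable
continuum, every finite closed cover of mesh less than `η/(4n)` has an element meeting at
least `n` other elements. -/
theorem whitney_level_cover_has_crowded_element
    (X : Type*) [MetricSpace X] [CompactSpace X] [ConnectedSpace X]
    (hX : HereditarilyIndecomposable X)
    (A B : Fin 2 → Set X) (hAB : IsEssentialFamily A B)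
    (hfar : ∀ i : Fin 2, ∀ x ∈ A i, ∀ y ∈ B i, 1 < dist x y)
    (μ : SubcontinuaHyp X → ℝ) (hμcont : Continuous μ)
    (hμ0 : ∀ (C : SubcontinuaHyp X) (x : X), (C.1 : Set X) = {x} → μ C = 0)
    (hμmono : ∀ C D : SubcontinuaHyp X, (C.1 : Set X) ⊂ (D.1 : Set X) → μ C < μ D)
    (r : ℝ) (hr : 0 < r)
    (hsmall : ∀ C : SubcontinuaHyp X, μ C = r → Metric.diam (C.1 : Set X) < 1 / 2)
    (η : ℝ)
    (hηmem : ∃ C : SubcontinuaHyp X, μ C = r ∧ Metric.diam (C.1 : Set X) = η)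
    (hηmin : ∀ C : SubcontinuaHyp X, μ C = r → η ≤ Metric.diam (C.1 : Set X))
    (n : ℕ) (hn : 0 < n)
    (F : Finset (Set (SubcontinuaHyp X)))
    (hFclosed : ∀ S ∈ F, IsClosed S)
    (hFsub : ∀ S ∈ F, S ⊆ {C : SubcontinuaHyp X | μ C = r})
    (hFmesh : ∀ S ∈ F, Metric.diam S < η / (4 * n))
    (hFcover : {C : SubcontinuaHyp X | μ C = r} ⊆ ⋃ S ∈ F, S) :
    ∃ S ∈ F, n ≤ {T | T ∈ F ∧ T ≠ S ∧ (S ∩ T).Nonempty}.ncard := by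
  have hstrict : StrictMono μ := fun C D hCD => hμmono C D (SetLike.coe_ssubset_coe.2 hCD)
  refine whitney_level_cover_has_crowded_element_general hX hAB hfar
    (hX.pairwiseDisjoint_level hstrict r) (fun x => ?_) hηmin
    (fun C hC => (hsmall C hC).le.trans (by norm_num)) hn hFclosed hFsub hFmesh hFcover
  obtain ⟨D, hD, -⟩ := hηmem
  have hDtop : μ D ≤ μ ⟨⊤, isConnected_univ⟩ :=
    hstrict.monotone (show D ≤ ⟨⊤, isConnected_univ⟩ from subset_univ (D.1 : Set X))
  obtain ⟨C, hxC, hC⟩ := hX.exists_mem_level hμcont hstrict (x := x)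
    (D := ⟨{x}, isConnected_singleton⟩) (E := ⟨⊤, isConnected_univ⟩) (r := r)
    (mem_singleton x) (mem_univ x) ((hμ0 _ x rfl).trans_le hr.le) (hD ▸ hDtop)
  exact ⟨C, hC, hxC⟩
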